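/- Under these hypotheses the multiplication is self-adjoint with respect to η: η(v*v₁, v₂) = η(v₁, v*v₂) for all v, v₁, v₂ ∈ D, even though η need not be ∇̸-horizontal. -/

import Mathlib

noncomputable section

variable {A : Type*} [CommRing A] [Algebra ℂ A]

/-- The coefficientwise action of a derivation `v` of `A` on the Laurent series ring
`A((z))`. -/
def derivAct (v : Derivation ℂ A A) (P : LaurentSeries A) : LaurentSeries A where
  coeff n := v (P.coeff n)
  isPWO_support' := P.isPWO_support.mono (by
    intro n hn
    rw [Function.mem_support] at hn
    rw [HahnSeries.mem_support]
    intro h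
    rw [h, map_zero] at hn
    exact hn rfl)

/-- The involution `σ : A((z)) → A((z))`, `P(z) ↦ P(−z)`. -/
def sigmaInv (P : LaurentSeries A) : LaurentSeries A where
  coeff n := ((((-1 : ℤˣ) ^ n : ℤˣ) : ℤ)) • P.coeff n
  isPWO_support' := P.isPWO_support.mono (by
    intro n hn
    rw [Function.mem_support] at hn
    rw [HahnSeries.mem_support]
    intro h
    rw [h, smul_zero] at hn
    exact hn rfl)

/-!
Differentiate `K(∇_{v₁}ζ, ∇_{v₂}ζ)` along `v` and insert the flat-structure expansion. Pulling
`z⁻¹` out of the second argument of `K` costs a sign, so the two polar terms combine to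
`z⁻¹ (K(∇_{v*v₁}ζ, ∇_{v₂}ζ) − K(∇_{v₁}ζ, ∇_{v*v₂}ζ))`. In degree `n − 3` the derivative and the
`∇̸`-terms vanish by weak purity, and what remains is `0 = η(v*v₁, v₂) − η(v₁, v*v₂)`; the
derivative of `η` only enters in degree `n − 2`.
-/

theorem derivAct_eq_map (v : Derivation ℂ A A) (P : LaurentSeries A) : derivAct v P = P.map v :=
  rfl

theorem sigmaInv_single {R : Type*} [CommRing R] (k : ℤ) (a : R) :
    sigmaInv (HahnSeries.single k a) =
      HahnSeries.single k ((((-1 : ℤˣ) ^ k : ℤˣ) : ℤ) • a) := by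
  ext j
  by_cases hj : j = k <;> simp [sigmaInv, hj]

theorem pairing_smul_add_left_add_right {S M : Type*} [Ring S] [AddCommMonoid M] [Module S M]
    {t : S} {K : M → M → S}
    (hK_addl : ∀ m m' w, K (m + m') w = K m w + K m' w)
    (hK_addr : ∀ w m m', K w (m + m') = K w m + K w m')
    (hK_smull : ∀ m w, K (t • m) w = t * K m w)
    (hK_smulr : ∀ w m, K w (t • m) = -(t * K w m)) (m₁ m₂ p₁ p₂ q₁ q₂ : M) :
    K (t • p₁ + q₁) m₂ + K m₁ (t • p₂ + q₂) =
      t * (K p₁ m₂ - K m₁ p₂) + (K q₁ m₂ + K m₁ q₂) := by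
  rw [hK_addl, hK_addr, hK_smull, hK_smulr, mul_sub]
  abel

section

open HahnSeries

/-- `D` stands for any set of directions, such as the sections of a Lie algebroid, whose action on
the coefficient ring is `anchor`. -/
theorem self_adjoint_without_purity_general {R M D F : Type*} [Ring R] [AddCommMonoid M]
    [Module (LaurentSeries R) M] [FunLike F R R] [ZeroHomClass F R R]
    (n : ℤ) (anchor : D → F) (nablaS mul : D → D → D) (nablaV : D → M → M)
    (K : M → M → LaurentSeries R)
    (hK_addl : ∀ m m' w, K (m + m') w = K m w + K m' w)
    (hK_addr : ∀ w m m', K w (m + m') = K w m + K w m')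
    (hK_smull : ∀ m w, K (single (-1 : ℤ) (1 : R) • m) w = single (-1) 1 * K m w)
    (hK_smulr : ∀ w m, K w (single (-1 : ℤ) (1 : R) • m) = -(single (-1) 1 * K w m))
    (hK_v : ∀ v m m', (K m m').map (anchor v) = K (nablaV v m) m' + K m (nablaV v m'))
    (zeta : M) (eta : D → D → R)
    (hweakpure : ∀ v w, ∀ j < n - 1,
      (K (nablaV v zeta) (nablaV w zeta) - single (n - 2) (eta v w)).coeff j = 0)
    (hflat : ∀ v₁ v₂, nablaV v₁ (nablaV v₂ zeta) =
      single (-1 : ℤ) (1 : R) • nablaV (mul v₁ v₂) zeta + nablaV (nablaS v₁ v₂) zeta)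
    (v v₁ v₂ : D) : eta (mul v v₁) v₂ = eta v₁ (mul v v₂) := by
  let g (u w : D) : LaurentSeries R := K (nablaV u zeta) (nablaV w zeta)
  have g_eq_single {u w : D} {j : ℤ} (hj : j < n - 1) :
      (g u w).coeff j = (single (n - 2) (eta u w)).coeff j :=
    sub_eq_zero.mp (hweakpure u w j hj)
  have g_lead (u w : D) : (g u w).coeff (n - 2) = eta u w := by
    rw [g_eq_single (by lia), coeff_single_same]
  have g_below (u w : D) : (g u w).coeff (n - 3) = 0 := by
    rw [g_eq_single (by lia), coeff_single_of_ne (by lia)]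
  have g_deriv : (g v₁ v₂).map (anchor v) =
      single (-1) 1 * (g (mul v v₁) v₂ - g v₁ (mul v v₂)) +
        (g (nablaS v v₁) v₂ + g v₁ (nablaS v v₂)) := by
    rw [hK_v, hflat, hflat, pairing_smul_add_left_add_right hK_addl hK_addr hK_smull hK_smulr]
  have index_shift : n - 3 - -1 = n - 2 := by ring
  refine sub_eq_zero.mp ?_
  calc eta (mul v v₁) v₂ - eta v₁ (mul v v₂)
      = ((g v₁ v₂).map (anchor v)).coeff (n - 3) := by
        simp [g_deriv, coeff_single_mul, index_shift, g_lead, g_below]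
    _ = 0 := by rw [map_coeff, g_below, map_zero]

end

/-- Let `M` be an `A((z))`-module with covariant derivatives `∇_v`
(`v ∈ D = Derivation ℂ A A`), a pairing `K` compatible with them, `ζ ∈ M`, `η` an
`A`-bilinear form on `D`, satisfying the weak purity
`K(∇_vζ, ∇_wζ) − η(v,w)·zⁿ⁻² ∈ zⁿ⁻¹·A[[z]]` and the flat-structure expansion
`∇_{v₁}∇_{v₂}ζ = z⁻¹∇_{v₁*v₂}ζ + ∇_{∇̸_{v₁}v₂}ζ`.  Then the multiplication is
self-adjoint with respect to `η`: `η(v*v₁, v₂) = η(v₁, v*v₂)`. -/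
theorem self_adjoint_without_purity
    (M : Type*) [AddCommGroup M] [Module (LaurentSeries A) M] (n : ℤ)
    -- the connection `∇̸` on `D`
    (nablaS : Derivation ℂ A A → Derivation ℂ A A → Derivation ℂ A A)
    (hnablaS_addl : ∀ v v' w, nablaS (v + v') w = nablaS v w + nablaS v' w)
    (hnablaS_smull : ∀ (a : A) (v w), nablaS (a • v) w = a • nablaS v w)
    (hnablaS_addr : ∀ v w w', nablaS v (w + w') = nablaS v w + nablaS v w')
    (hnablaS_leib : ∀ (v) (a : A) (w), nablaS v (a • w) = v a • w + a • nablaS v w)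
    -- the `A`-bilinear multiplication `*` on `D`
    (mul : Derivation ℂ A A → Derivation ℂ A A → Derivation ℂ A A)
    (hmul_addl : ∀ u v w, mul (u + v) w = mul u w + mul v w)
    (hmul_smull : ∀ (a : A) (u w), mul (a • u) w = a • mul u w)
    (hmul_addr : ∀ u v w, mul u (v + w) = mul u v + mul u w)
    (hmul_smulr : ∀ (a : A) (u w), mul u (a • w) = a • mul u w)
    -- the covariant derivatives on `M`
    (nablaV : Derivation ℂ A A → M → M)
    (hnablaV_add : ∀ v m m', nablaV v (m + m') = nablaV v m + nablaV v m')
    (hnablaV_leib : ∀ v (P : LaurentSeries A) (m : M),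
      nablaV v (P • m) = derivAct v P • m + P • nablaV v m)
    -- the pairing `K`
    (K : M → M → LaurentSeries A)
    (hK_addl : ∀ m m' w, K (m + m') w = K m w + K m' w)
    (hK_addr : ∀ w m m', K w (m + m') = K w m + K w m')
    (hK_Pl : ∀ (P : LaurentSeries A) (m w : M), K (P • m) w = P * K m w)
    (hK_Pr : ∀ (P : LaurentSeries A) (m w : M), K w (P • m) = sigmaInv P * K w m)
    (hK_v : ∀ (v : Derivation ℂ A A) (m m' : M),
      derivAct v (K m m') = K (nablaV v m) m' + K m (nablaV v m'))
    -- the distinguished element and the bilinear form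
    (zeta : M) (eta : Derivation ℂ A A → Derivation ℂ A A → A)
    (heta_addl : ∀ u u' w, eta (u + u') w = eta u w + eta u' w)
    (heta_smull : ∀ (a : A) (u w), eta (a • u) w = a * eta u w)
    (heta_addr : ∀ w u u', eta w (u + u') = eta w u + eta w u')
    (heta_smulr : ∀ (a : A) (u w), eta w (a • u) = a * eta w u)
    -- weak purity: `K(∇_vζ, ∇_wζ) − η(v,w)zⁿ⁻²` has vanishing coefficients
    -- in all degrees `< n − 1`
    (hweakpure : ∀ v w : Derivation ℂ A A, ∀ j : ℤ, j < n - 1 →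
      (K (nablaV v zeta) (nablaV w zeta)
        - HahnSeries.single (n - 2) (eta v w)).coeff j = 0)
    -- the flat-structure expansion
    (hflat : ∀ v₁ v₂ : Derivation ℂ A A,
      nablaV v₁ (nablaV v₂ zeta)
        = (HahnSeries.single (-1 : ℤ) (1 : A) : LaurentSeries A) • nablaV (mul v₁ v₂) zeta
          + nablaV (nablaS v₁ v₂) zeta) :
    ∀ v v₁ v₂ : Derivation ℂ A A, eta (mul v v₁) v₂ = eta v₁ (mul v v₂) := by
  exact self_adjoint_without_purity_general n id nablaS mul nablaV K hK_addl hK_addr (hK_Pl _)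
    (by simp [hK_Pr, sigmaInv_single]) (by simpa [derivAct_eq_map] using hK_v)
    zeta eta hweakpure hflat

end
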